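/- For every n ≥ 1, r_3(ℤ_6^n) = 2^n · r_3(ℤ_3^n). -/

import Mathlib

/-- `A` contains a `k`-term arithmetic progression `a, a+d, …, a+(k-1)d`
whose terms are pairwise distinct. -/
def IsDistinctAP {G : Type*} [AddCommGroup G] (k : ℕ) (A : Set G) : Prop :=
  ∃ a d : G, (∀ i : Fin k, a + (i : ℕ) • d ∈ A) ∧
    Function.Injective fun i : Fin k => a + (i : ℕ) • d

/-- `rAP k m n` is the largest cardinality of a subset of `(ℤ/mℤ)^n` containing
no `k`-term arithmetic progression of pairwise distinct elements. -/
noncomputable def rAP (k m n : ℕ) : ℕ :=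
  sSup {s : ℕ | ∃ A : Finset (Fin n → ZMod m),
    ¬ IsDistinctAP k (A : Set (Fin n → ZMod m)) ∧ A.card = s}

/-!
If `H` and `G` are finite abelian groups such that every element of `H` has order less than `k`
and every nonzero element of `G` has order at least `k`, then a `k`-term progression in `H × G`
has distinct terms exactly when the `G`-component of its difference is nonzero. Hence `H × B` is
progression-free whenever `B ⊆ G` is; conversely each slice over a point of `H` of a
progression-free set is progression-free. By the Chinese remainder theorem this applies to
`(ℤ/qm)ⁿ ≃ (ℤ/q)ⁿ × (ℤ/m)ⁿ` when `q < k` and every prime factor of `m` is at least `k`.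
-/

section Progressions

variable {G H : Type*} [AddCommGroup G] [AddCommGroup H] {k : ℕ}

theorem injective_add_nsmul_fin_iff_le_addOrderOf {d : G} (hd : IsOfFinAddOrder d) (a : G) :
    Function.Injective (fun i : Fin k => a + (i : ℕ) • d) ↔ k ≤ addOrderOf d := by
  refine ⟨fun hinj => ?_, fun hk i j hij => ?_⟩
  · by_contra! hlt
    have hpos : 0 < addOrderOf d := hd.addOrderOf_pos
    have hindex : (⟨addOrderOf d, hlt⟩ : Fin k) = ⟨0, hpos.trans hlt⟩ :=
      hinj (by simp [addOrderOf_nsmul_eq_zero])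
    exact hpos.ne' (congrArg Fin.val hindex)
  · exact Fin.ext (nsmul_injOn_Iio_addOrderOf (i.isLt.trans_le hk) (j.isLt.trans_le hk)
      (add_left_cancel hij))

theorem not_isDistinctAP_empty (hk : k ≠ 0) : ¬ IsDistinctAP k (∅ : Set G) :=
  fun ⟨_, _, hmem, _⟩ => hmem ⟨0, Nat.pos_of_ne_zero hk⟩

theorem IsDistinctAP.of_preimage_const_add {A : Set H} {f : G →+ H} (hf : Function.Injective f)
    (c : H) (h : IsDistinctAP k ((fun x => c + f x) ⁻¹' A)) : IsDistinctAP k A := by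
  obtain ⟨a, d, hmem, hinj⟩ := h
  have hterm (i : Fin k) : c + f a + (i : ℕ) • f d = c + f (a + (i : ℕ) • d) := by
    rw [map_add, map_nsmul, add_assoc]
  refine ⟨c + f a, f d, fun i => hterm i ▸ hmem i, ?_⟩
  simp only [hterm]
  exact ((add_right_injective c).comp hf).comp hinj

theorem isDistinctAP_preimage_addEquiv_iff (e : G ≃+ H) {A : Set H} :
    IsDistinctAP k (e ⁻¹' A) ↔ IsDistinctAP k A := by
  constructor <;> intro h
  · exact .of_preimage_const_add (f := (e : G →+ H)) e.injective 0 (by simpa using h)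
  · refine .of_preimage_const_add (f := (e.symm : H →+ G)) e.symm.injective 0 ?_
    simpa [Set.preimage] using h

theorem IsDistinctAP.of_preimage_prodMk {A : Set (H × G)} (x : H)
    (h : IsDistinctAP k (Prod.mk x ⁻¹' A)) : IsDistinctAP k A :=
  .of_preimage_const_add (f := AddMonoidHom.inr H G) (Prod.mk_right_injective 0) (x, 0)
    (by simpa using h)

theorem IsDistinctAP.of_preimage_snd [Finite G] [Finite H] (hH : ∀ x : H, addOrderOf x < k)
    (hG : ∀ y : G, y ≠ 0 → k ≤ addOrderOf y) {B : Set G}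
    (h : IsDistinctAP k (Prod.snd ⁻¹' B : Set (H × G))) : IsDistinctAP k B := by
  obtain ⟨a, d, hmem, hinj⟩ := h
  rw [injective_add_nsmul_fin_iff_le_addOrderOf (isOfFinAddOrder_of_finite d)] at hinj
  have hd : d.2 ≠ 0 := by
    intro hd
    rw [Prod.addOrderOf, hd, addOrderOf_zero, Nat.lcm_one_right] at hinj
    exact (hH d.1).not_ge hinj
  exact ⟨a.2, d.2, hmem,
    (injective_add_nsmul_fin_iff_le_addOrderOf (isOfFinAddOrder_of_finite d.2) a.2).2 (hG d.2 hd)⟩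

end Progressions

/-- The largest cardinality of a finite subset of `G` without a `k`-term progression of distinct
elements: the quantity `rAP` for an arbitrary abelian group. It has the junk value `0` when these
cardinalities are unbounded, or when `k = 0` and no subset qualifies. -/
noncomputable def maxAPFreeCard (k : ℕ) (G : Type*) [AddCommGroup G] : ℕ :=
  sSup {s : ℕ | ∃ A : Finset G, ¬ IsDistinctAP k (A : Set G) ∧ A.card = s}

theorem rAP_eq_maxAPFreeCard (k m n : ℕ) : rAP k m n = maxAPFreeCard k (Fin n → ZMod m) :=
  rfl

section MaxAPFreeCard

variable {G H : Type*} [AddCommGroup G] [AddCommGroup H] {k : ℕ}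

theorem maxAPFreeCard_congr (e : G ≃+ H) : maxAPFreeCard k G = maxAPFreeCard k H := by
  refine congrArg sSup (Set.ext fun s => e.toEquiv.finsetCongr.exists_congr fun A => ?_)
  have hAP : IsDistinctAP k (e.toEquiv.finsetCongr A : Set H) ↔ IsDistinctAP k (A : Set G) := by
    rw [← isDistinctAP_preimage_addEquiv_iff e]
    simp [Set.preimage_image_eq _ e.injective]
  rw [hAP, Equiv.finsetCongr_apply, Finset.card_map]

theorem bddAbove_card_not_isDistinctAP [Finite G] :
    BddAbove {s : ℕ | ∃ A : Finset G, ¬ IsDistinctAP k (A : Set G) ∧ A.card = s} := by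
  have := Fintype.ofFinite G
  exact ⟨Fintype.card G, by rintro _ ⟨A, -, rfl⟩; exact A.card_le_univ⟩

theorem card_le_maxAPFreeCard [Finite G] {A : Finset G} (hA : ¬ IsDistinctAP k (A : Set G)) :
    A.card ≤ maxAPFreeCard k G :=
  le_csSup bddAbove_card_not_isDistinctAP ⟨A, hA, rfl⟩

theorem exists_card_eq_maxAPFreeCard [Finite G] (hk : k ≠ 0) :
    ∃ A : Finset G, ¬ IsDistinctAP k (A : Set G) ∧ A.card = maxAPFreeCard k G :=
  Nat.sSup_mem (s := {s | ∃ A : Finset G, ¬ IsDistinctAP k (A : Set G) ∧ A.card = s})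
    ⟨0, ∅, by simpa using not_isDistinctAP_empty hk, rfl⟩ bddAbove_card_not_isDistinctAP

theorem card_filter_fst_eq_le_maxAPFreeCard [Finite G] [DecidableEq H] {A : Finset (H × G)}
    (hA : ¬ IsDistinctAP k (A : Set (H × G))) (x : H) :
    (A.filter fun p => p.1 = x).card ≤ maxAPFreeCard k G := by
  classical
  let slice : Finset G := A.preimage (Prod.mk x) (Prod.mk_right_injective x).injOn
  have hcard : slice.card = (A.filter fun p => p.1 = x).card := by
    rw [Finset.card_preimage]
    congr 1
    ext ⟨y, z⟩
    simp [eq_comm]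
  rw [← hcard]
  exact card_le_maxAPFreeCard fun h => hA (.of_preimage_prodMk x (by simpa [slice] using h))

theorem maxAPFreeCard_prod_le [Finite G] [Finite H] :
    maxAPFreeCard k (H × G) ≤ Nat.card H * maxAPFreeCard k G := by
  classical
  have := Fintype.ofFinite H
  refine csSup_le' ?_
  rintro _ ⟨A, hA, rfl⟩
  rw [Nat.card_eq_fintype_card, mul_comm]
  exact Finset.card_le_mul_card_image_of_maps_to (fun p _ => Finset.mem_univ p.1) _
    fun x _ => card_filter_fst_eq_le_maxAPFreeCard hA x

theorem card_mul_maxAPFreeCard_le_prod [Finite G] [Finite H] (hH : ∀ x : H, addOrderOf x < k)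
    (hG : ∀ y : G, y ≠ 0 → k ≤ addOrderOf y) :
    Nat.card H * maxAPFreeCard k G ≤ maxAPFreeCard k (H × G) := by
  have := Fintype.ofFinite H
  obtain ⟨B, hB, hcard⟩ := exists_card_eq_maxAPFreeCard (G := G) (Nat.ne_zero_of_lt (hH 0))
  rw [← hcard, Nat.card_eq_fintype_card, ← Finset.card_univ, ← Finset.card_product]
  refine card_le_maxAPFreeCard fun h => hB (.of_preimage_snd hH hG ?_)
  simpa [Set.univ_prod] using h

theorem maxAPFreeCard_prod [Finite G] [Finite H] (hH : ∀ x : H, addOrderOf x < k)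
    (hG : ∀ y : G, y ≠ 0 → k ≤ addOrderOf y) :
    maxAPFreeCard k (H × G) = Nat.card H * maxAPFreeCard k G :=
  maxAPFreeCard_prod_le.antisymm (card_mul_maxAPFreeCard_le_prod hH hG)

end MaxAPFreeCard

section PiZMod

variable {ι : Type*} {k m : ℕ}

/-- The Chinese remainder isomorphism, applied in each coordinate. -/
def piZModMulAddEquiv (ι : Type*) {q m : ℕ} (h : q.Coprime m) :
    (ι → ZMod (q * m)) ≃+ (ι → ZMod q) × (ι → ZMod m) :=
  (AddEquiv.piCongrRight fun _ => (ZMod.chineseRemainder h).toAddEquiv).trans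
    { Equiv.arrowProdEquivProdArrow ι (fun _ => ZMod q) (fun _ => ZMod m) with
      map_add' := fun _ _ => rfl }

theorem addOrderOf_pi_zmod_dvd (x : ι → ZMod m) : addOrderOf x ∣ m :=
  addOrderOf_dvd_of_nsmul_eq_zero (by ext i; simp)

theorem le_addOrderOf_pi_zmod (hm : m ≠ 0) (hmk : ∀ p : ℕ, p.Prime → p ∣ m → k ≤ p)
    {x : ι → ZMod m} (hx : x ≠ 0) : k ≤ addOrderOf x := by
  have hdvd : addOrderOf x ∣ m := addOrderOf_pi_zmod_dvd x
  have hprime : (addOrderOf x).minFac.Prime :=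
    Nat.minFac_prime (mt AddMonoid.addOrderOf_eq_one_iff.1 hx)
  calc k ≤ (addOrderOf x).minFac := hmk _ hprime ((Nat.minFac_dvd _).trans hdvd)
    _ ≤ addOrderOf x := Nat.minFac_le (Nat.pos_of_dvd_of_pos hdvd (Nat.pos_of_ne_zero hm))

end PiZMod

theorem r3_Z6_eq_general {k q m : ℕ} (hq : q ≠ 0) (hm : m ≠ 0) (hqk : q < k)
    (hmk : ∀ p : ℕ, p.Prime → p ∣ m → k ≤ p) (n : ℕ) :
    rAP k (q * m) n = q ^ n * rAP k m n := by
  have : NeZero q := ⟨hq⟩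
  have : NeZero m := ⟨hm⟩
  have hcoprime : q.Coprime m := Nat.coprime_of_dvd fun p hp hpq hpm =>
    ((Nat.le_of_dvd (Nat.pos_of_ne_zero hq) hpq).trans_lt hqk).not_ge (hmk p hp hpm)
  have horder (x : Fin n → ZMod q) : addOrderOf x < k :=
    (Nat.le_of_dvd (Nat.pos_of_ne_zero hq) (addOrderOf_pi_zmod_dvd x)).trans_lt hqk
  rw [rAP_eq_maxAPFreeCard, rAP_eq_maxAPFreeCard]
  calc maxAPFreeCard k (Fin n → ZMod (q * m))
      = maxAPFreeCard k ((Fin n → ZMod q) × (Fin n → ZMod m)) :=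
        maxAPFreeCard_congr (piZModMulAddEquiv (Fin n) hcoprime)
    _ = Nat.card (Fin n → ZMod q) * maxAPFreeCard k (Fin n → ZMod m) :=
        maxAPFreeCard_prod horder fun _ => le_addOrderOf_pi_zmod hm hmk
    _ = q ^ n * maxAPFreeCard k (Fin n → ZMod m) := by simp

theorem r3_Z6_eq (n : ℕ) (hn : 1 ≤ n) : rAP 3 6 n = 2 ^ n * rAP 3 3 n :=
  r3_Z6_eq_general (q := 2) (m := 3) two_ne_zero three_ne_zero (by decide)
    (fun _ hp hdvd => ((Nat.prime_dvd_prime_iff_eq hp Nat.prime_three).1 hdvd).ge) n
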